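/- Let d ≥ 7 be an integer and set λ = (−d + 6 + √(d² + 4d − 28))/2 (so that 3 ≤ λ < 4). Let ũ, h̃ ∈ C²((0,r₀)) solve the system ũ″ + ((d−5)/r)ũ′ + (2(d−4)/r²)(ũh̃ − ũ) − r²ũ = 0 and h̃″ + ((d−5)/r)h̃′ + (2(d−4)/r²)(ũ² − h̃) = 0 on (0,r₀), and suppose ũ(r) → 1 and h̃(r) → 1 as r → 0⁺. Then there exist a constant c ∈ ℝ and constants C, r₁ > 0 such that |ũ(r) − 1 + c·r^λ| ≤ C·r⁴ and |h̃(r) − 1 − 2c·r^λ| ≤ C·r⁴ for all 0 < r < r₁. -/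

import Mathlib

open Set Filter Topology

lemma monotoneOn_Iio_of_hasDerivAt_nonneg {G g : ℝ → ℝ} {T : ℝ}
    (hG : ∀ t < T, HasDerivAt G (g t) t) (hg : ∀ t < T, 0 ≤ g t) : MonotoneOn G (Iio T) := by
  refine monotoneOn_of_deriv_nonneg (convex_Iio T)
    (fun t ht => (hG t ht).continuousAt.continuousWithinAt) ?_ ?_
  · rw [interior_Iio]
    exact fun t ht => (hG t ht).differentiableAt.differentiableWithinAt
  · rw [interior_Iio]
    intro t ht
    rw [(hG t ht).deriv]
    exact hg t ht

/-- A function with nonnegative derivative on `(-∞, T)` lies above its limit at `-∞`. -/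
lemma le_of_hasDerivAt_nonneg_of_tendsto_atBot {G g : ℝ → ℝ} {T l : ℝ}
    (hG : ∀ t < T, HasDerivAt G (g t) t) (hg : ∀ t < T, 0 ≤ g t)
    (hlim : Tendsto G atBot (𝓝 l)) {t : ℝ} (ht : t < T) : l ≤ G t := by
  refine le_of_tendsto hlim ?_
  filter_upwards [eventually_le_atBot t] with s hs
  exact monotoneOn_Iio_of_hasDerivAt_nonneg hG hg (lt_of_le_of_lt hs ht) ht hs

lemma tendsto_exp_mul_atBot {a : ℝ} (ha : 0 < a) :
    Tendsto (fun t : ℝ => Real.exp (a * t)) atBot (𝓝 0) :=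
  Real.tendsto_exp_atBot.comp (tendsto_id.const_mul_atBot ha)

lemma hasDerivAt_exp_mul (a t : ℝ) :
    HasDerivAt (fun t : ℝ => Real.exp (a * t)) (a * Real.exp (a * t)) t := by
  simpa [mul_comm] using ((hasDerivAt_id t).const_mul a).exp

/-- If `y' = P`, `P' = g - k P` with `g ≤ ε` on `(-∞, T)` and `y` has a limit at `-∞`,
then `P ≤ ε / k`: otherwise `P` stays bounded below by a positive constant and `y` diverges. -/
lemma damped_velocity_le {y P g : ℝ → ℝ} {k ε T l : ℝ} (hk : 0 < k) (hε : 0 ≤ ε)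
    (hy : ∀ t < T, HasDerivAt y (P t) t) (hP : ∀ t < T, HasDerivAt P (g t - k * P t) t)
    (hg : ∀ t < T, g t ≤ ε) (hlim : Tendsto y atBot (𝓝 l)) {t : ℝ} (ht : t < T) :
    P t ≤ ε / k := by
  by_contra! hcon
  set η := P t - ε / k with hη
  have hη0 : 0 < η := by linarith
  have hmono := monotoneOn_Iio_of_hasDerivAt_nonneg
    (G := fun s => -((P s - ε / k) * Real.exp (k * s)))
    (g := fun s => (ε - g s) * Real.exp (k * s)) (T := T)
    (fun s hs => by
      refine (((hP s hs).sub_const (ε / k)).mul (hasDerivAt_exp_mul k s)).neg.congr_deriv ?_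
      field_simp
      ring)
    (fun s hs => mul_nonneg (by linarith [hg s hs]) (Real.exp_pos _).le)
  have hlow : ∀ s ≤ t, η ≤ P s := by
    intro s hs
    have h1 := hmono (lt_of_le_of_lt hs ht) ht hs
    simp only [neg_le_neg_iff] at h1
    have h2 : Real.exp (k * s) ≤ Real.exp (k * t) := Real.exp_le_exp.2 (by nlinarith)
    have h3 : η * Real.exp (k * s) ≤ (P s - ε / k) * Real.exp (k * s) :=
      (mul_le_mul_of_nonneg_left h2 hη0.le).trans h1
    have h4 := le_of_mul_le_mul_right h3 (Real.exp_pos _)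
    have : 0 ≤ ε / k := by positivity
    linarith
  have hmono2 := monotoneOn_Iio_of_hasDerivAt_nonneg
    (G := fun s => y s - η * s) (g := fun s => P s - η) (T := t)
    (fun s hs => by
      simpa using (hy s (hs.trans ht)).fun_sub ((hasDerivAt_id s).const_mul η))
    (fun s hs => by linarith [hlow s hs.le])
  have hbot : Tendsto y atBot atBot := by
    refine tendsto_atBot_mono' atBot (f₁ := fun s => y (t - 1) - η * (t - 1) + η * s) ?_
      (tendsto_atBot_add_const_left _ _ (tendsto_id.const_mul_atBot hη0))
    filter_upwards [eventually_le_atBot (t - 1)] with s hs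
    have := hmono2 (show s ∈ Iio t by simp only [mem_Iio]; linarith)
      (show t - 1 ∈ Iio t by simp) hs
    simp only at this
    linarith
  exact not_tendsto_nhds_of_tendsto_atBot hbot l hlim

/-- If `y' = P`, `P' = g - k P` near `-∞`, `y` converges and `g → 0`, then `P → 0`. -/
lemma tendsto_damped_velocity {y P g : ℝ → ℝ} {k T l : ℝ} (hk : 0 < k)
    (hy : ∀ t < T, HasDerivAt y (P t) t) (hP : ∀ t < T, HasDerivAt P (g t - k * P t) t)
    (hg : Tendsto g atBot (𝓝 0)) (hlim : Tendsto y atBot (𝓝 l)) :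
    Tendsto P atBot (𝓝 0) := by
  rw [Metric.tendsto_nhds]
  intro ε hε
  obtain ⟨S, hS⟩ := eventually_atBot.1
    (Metric.tendsto_nhds.1 hg (ε * k / 2) (by positivity))
  filter_upwards [eventually_lt_atBot (min S T)] with t ht
  have hb : ∀ s < min S T, |g s| ≤ ε * k / 2 := fun s hs => by
    simpa using (hS s (hs.le.trans (min_le_left _ _))).le
  have hT : ∀ s < min S T, s < T := fun s hs => hs.trans_le (min_le_right _ _)
  have hup := damped_velocity_le hk (by positivity) (fun s hs => hy s (hT s hs))
    (fun s hs => hP s (hT s hs)) (fun s hs => (abs_le.1 (hb s hs)).2) hlim ht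
  have hdown := damped_velocity_le (y := fun s => -y s) (P := fun s => -P s)
    (g := fun s => -g s) (ε := ε * k / 2) hk (by positivity)
    (fun s hs => (hy s (hT s hs)).neg)
    (fun s hs => (hP s (hT s hs)).neg.congr_deriv (by ring))
    (fun s hs => by linarith [(abs_le.1 (hb s hs)).1]) hlim.neg ht
  have he : ε * k / 2 / k = ε / 2 := by field_simp
  rw [he] at hup hdown
  rw [Real.dist_eq, sub_zero, abs_lt]
  constructor <;> linarith

/-- Along a trajectory converging to the fixed point, the unstable component `A` dominates the
stable energy `V` up to the forcing, and both decay exponentially at `-∞`. -/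
lemma unstable_manifold_decay {A F V V' : ℝ → ℝ} {lam M T : ℝ} (hlam : 3 ≤ lam) (hM : 0 ≤ M)
    (hA : ∀ t < T, HasDerivAt A (lam * A t + F t) t) (hV : ∀ t < T, HasDerivAt V (V' t) t)
    (hF : ∀ t < T, F t ^ 2 ≤ M * Real.exp (8 * t) + (A t ^ 2 + V t) / 44)
    (hV' : ∀ t < T,
      V' t ≤ -(V t) / 4 + 10 * (M * Real.exp (8 * t) + (A t ^ 2 + V t) / 44))
    (hAlim : Tendsto A atBot (𝓝 0)) (hVlim : Tendsto V atBot (𝓝 0)) :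
    ∃ C ≥ 0, ∃ S ≤ T, ∀ t < S, A t ^ 2 + V t ≤ C * Real.exp (4 * t) := by
  have hA2 : ∀ t < T, HasDerivAt (fun s => A s ^ 2) (2 * A t * (lam * A t + F t)) t :=
    fun t ht => by simpa using (hA t ht).fun_pow 2
  have hA2low : ∀ t < T, 5 * A t ^ 2 - F t ^ 2 ≤ 2 * A t * (lam * A t + F t) := fun t ht => by
    nlinarith [sq_nonneg (A t + F t), sq_nonneg (A t)]
  have hdom : ∀ t < T, V t ≤ A t ^ 2 + 2 * M * Real.exp (8 * t) := by
    intro t ht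
    have := le_of_hasDerivAt_nonneg_of_tendsto_atBot (T := T) (l := 0)
      (G := fun s => A s ^ 2 + 2 * M * Real.exp (8 * s) - V s)
      (fun s hs => ((hA2 s hs).add ((hasDerivAt_exp_mul 8 s).const_mul (2 * M))).sub (hV s hs))
      (fun s hs => by
        have := mul_nonneg hM (Real.exp_pos (8 * s)).le
        nlinarith [hA2low s hs, hF s hs, hV' s hs, sq_nonneg (A s)])
      (by simpa using ((hAlim.pow 2).add
        ((tendsto_exp_mul_atBot (by norm_num : (0:ℝ) < 8)).const_mul (2 * M))).sub hVlim) ht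
    linarith
  set U : ℝ → ℝ := fun s => A s ^ 2 + 2 * M * Real.exp (8 * s) with hU
  have hmono := monotoneOn_Iio_of_hasDerivAt_nonneg (T := T)
    (G := fun s => U s * Real.exp (-4 * s))
    (fun s hs => ((hA2 s hs).add ((hasDerivAt_exp_mul 8 s).const_mul (2 * M))).mul
      (hasDerivAt_exp_mul (-4) s))
    (fun s hs => by
      have h0 := mul_nonneg hM (Real.exp_pos (8 * s)).le
      have h1 : 0 ≤ 2 * A s * (lam * A s + F s) + 2 * M * (8 * Real.exp (8 * s)) - 4 * U s := by
        simp only [hU]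
        nlinarith [hA2low s hs, hF s hs, hdom s hs, sq_nonneg (A s)]
      have h2 := mul_nonneg h1 (Real.exp_pos (-4 * s)).le
      simp only [hU, Pi.add_apply] at h2 ⊢
      linarith)
  have hU0 : ∀ s, 0 ≤ U s := fun s => by
    simp only [hU]
    positivity
  refine ⟨2 * (U (T - 1) * Real.exp (-4 * (T - 1))),
    mul_nonneg zero_le_two (mul_nonneg (hU0 _) (Real.exp_pos _).le), T - 1, by linarith,
    fun t ht => ?_⟩
  have htT : t < T := by linarith
  have h1 := hmono (mem_Iio.2 htT) (show T - 1 ∈ Iio T by simp) ht.le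
  have h2 := mul_le_mul_of_nonneg_right h1 (Real.exp_pos (4 * t)).le
  have h3 : U t * Real.exp (-4 * t) * Real.exp (4 * t) = U t := by
    rw [mul_assoc, ← Real.exp_add]
    simp
  rw [h3] at h2
  have h4 := hdom t htT
  have h5 := mul_nonneg hM (Real.exp_pos (8 * t)).le
  simp only [hU] at h2 ⊢
  linarith

lemma stable_energy_le {V V' : ℝ → ℝ} {M T : ℝ} (hM : 0 ≤ M)
    (hV : ∀ t < T, HasDerivAt V (V' t) t)
    (hV' : ∀ t < T, V' t ≤ -(V t) / 4 + M * Real.exp (8 * t))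
    (hVlim : Tendsto V atBot (𝓝 0)) {t : ℝ} (ht : t < T) : V t ≤ M * Real.exp (8 * t) := by
  have h := le_of_hasDerivAt_nonneg_of_tendsto_atBot (T := T) (l := 0)
    (G := fun s => (M * Real.exp (8 * s) - V s) * Real.exp (1 / 4 * s))
    (fun s hs => (((hasDerivAt_exp_mul 8 s).const_mul M).sub (hV s hs)).mul
      (hasDerivAt_exp_mul (1 / 4) s))
    (fun s hs => by
      have h0 := mul_nonneg hM (Real.exp_pos (8 * s)).le
      have h1 : 0 ≤ M * (8 * Real.exp (8 * s)) - V' s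
          + (M * Real.exp (8 * s) - V s) * (1 / 4) := by linarith [hV' s hs]
      have h2 := mul_nonneg h1 (Real.exp_pos (1 / 4 * s)).le
      simp only [Pi.sub_apply]
      linarith)
    (by simpa using (((tendsto_exp_mul_atBot (by norm_num : (0:ℝ) < 8)).const_mul M).sub
      hVlim).mul (tendsto_exp_mul_atBot (by norm_num : (0:ℝ) < 1 / 4))) ht
  have := nonneg_of_mul_nonneg_left h (Real.exp_pos _)
  linarith

/-- A solution of `A' = lam A + O(exp (4 t))` with `lam < 4` is asymptotic to a multiple of
`exp (lam t)` at `-∞`, up to `O(exp (4 t))`. -/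
lemma exists_leading_coefficient {A F : ℝ → ℝ} {lam M T : ℝ} (hlam : lam < 4) (hM : 0 ≤ M)
    (hA : ∀ t < T, HasDerivAt A (lam * A t + F t) t)
    (hF : ∀ t < T, |F t| ≤ M * Real.exp (4 * t)) :
    ∃ a : ℝ, ∀ t < T, |A t - a * Real.exp (lam * t)| ≤ M / (4 - lam) * Real.exp (4 * t) := by
  have h4 : 0 < 4 - lam := by linarith
  set N := M / (4 - lam) with hN
  have hN0 : 0 ≤ N := by positivity
  have hNM : N * (4 - lam) = M := by rw [hN]; field_simp
  have hexp : ∀ t, Real.exp (4 * t) * Real.exp (-lam * t) = Real.exp ((4 - lam) * t) :=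
    fun t => by rw [← Real.exp_add]; ring_nf
  have hderiv : ∀ t < T, HasDerivAt (fun s => A s * Real.exp (-lam * s))
      (F t * Real.exp (-lam * t)) t := fun t ht =>
    ((hA t ht).mul (hasDerivAt_exp_mul (-lam) t)).congr_deriv (by ring)
  have hFe : ∀ t < T, |F t * Real.exp (-lam * t)| ≤ M * Real.exp ((4 - lam) * t) :=
    fun t ht => by
      rw [abs_mul, abs_of_pos (Real.exp_pos (-lam * t)), ← hexp, ← mul_assoc]
      exact mul_le_mul_of_nonneg_right (hF t ht) (Real.exp_pos _).le
  set H : ℝ → ℝ := fun s => A s * Real.exp (-lam * s) with hH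
  set R : ℝ → ℝ := fun s => N * Real.exp ((4 - lam) * s) with hR
  have hRderiv : ∀ t, HasDerivAt R (M * Real.exp ((4 - lam) * t)) t := fun t => by
    rw [← hNM, mul_assoc]
    exact (hasDerivAt_exp_mul (4 - lam) t).const_mul N
  have hR0 : ∀ t, 0 ≤ R t := fun t => mul_nonneg hN0 (Real.exp_pos _).le
  have hup := monotoneOn_Iio_of_hasDerivAt_nonneg (T := T) (G := fun s => H s + R s)
    (fun s hs => (hderiv s hs).add (hRderiv s))
    (fun s hs => by linarith [(abs_le.1 (hFe s hs)).1])
  have hdown := monotoneOn_Iio_of_hasDerivAt_nonneg (T := T) (G := fun s => R s - H s)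
    (fun s hs => (hRderiv s).sub (hderiv s hs))
    (fun s hs => by linarith [(abs_le.1 (hFe s hs)).2])
  have hcross : ∀ s < T, ∀ t < T, H s - R s ≤ H t + R t := by
    intro s hs t ht
    rcases le_total s t with hst | hst
    · have := hup hs ht hst
      simp only at this
      linarith [hR0 s]
    · have := hdown ht hs hst
      simp only at this
      linarith [hR0 t]
  have hlow : BddBelow (Set.image (fun s => H s + R s) (Iio T)) := by
    refine ⟨H (T - 1) - R (T - 1), ?_⟩
    rintro _ ⟨t, ht, rfl⟩
    exact hcross _ (by linarith) _ ht
  refine ⟨sInf (Set.image (fun s => H s + R s) (Iio T)), fun t ht => ?_⟩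
  set a := sInf (Set.image (fun s => H s + R s) (Iio T))
  have ha1 : a ≤ H t + R t := csInf_le hlow ⟨t, ht, rfl⟩
  have ha2 : H t - R t ≤ a := by
    refine le_csInf ⟨_, t, ht, rfl⟩ ?_
    rintro _ ⟨s, hs, rfl⟩
    exact hcross t ht s hs
  have hHA : A t = H t * Real.exp (lam * t) := by
    simp only [hH]
    rw [mul_assoc, ← Real.exp_add]
    simp
  have hRA : R t * Real.exp (lam * t) = N * Real.exp (4 * t) := by
    simp only [hR]
    rw [mul_assoc, ← Real.exp_add]
    ring_nf
  rw [hHA, ← sub_mul, abs_mul, abs_of_pos (Real.exp_pos (lam * t)), ← hRA]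
  refine mul_le_mul_of_nonneg_right ?_ (Real.exp_pos _).le
  rw [abs_le]
  constructor <;> linarith

/-- The quadratic forcing terms of the linearised system are small. -/
lemma forcing_sq_le {m s v w X Y : ℝ} (hv1 : |v| ≤ 1) (hv : v ^ 2 ≤ X) (hw : w ^ 2 ≤ Y)
    (hvY : v ^ 2 ≤ Y) :
    (2 * (s * (1 + v) - m * (v * w)) - m * v ^ 2) ^ 2 ≤ 64 * s ^ 2 + 18 * m ^ 2 * (X * Y) ∧
    (s * (1 + v) - m * (v * w) + m * v ^ 2) ^ 2 ≤ 64 * s ^ 2 + 18 * m ^ 2 * (X * Y) := by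
  have hX : 0 ≤ X := (sq_nonneg v).trans hv
  have h1 : v ^ 2 * w ^ 2 ≤ X * Y := mul_le_mul hv hw (sq_nonneg w) hX
  have h2 : v ^ 2 * v ^ 2 ≤ X * Y := mul_le_mul hv hvY (sq_nonneg v) hX
  have h3 : (1 + v) ^ 2 ≤ 4 := by
    have := abs_le.1 hv1
    nlinarith
  have h4 : (s * (1 + v)) ^ 2 ≤ 4 * s ^ 2 := by
    rw [mul_pow]
    nlinarith [sq_nonneg s]
  have h5 : (m * (v * w)) ^ 2 ≤ m ^ 2 * (X * Y) := by
    rw [mul_pow, mul_pow]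
    exact mul_le_mul_of_nonneg_left h1 (sq_nonneg m)
  have h6 : (m * v ^ 2) ^ 2 ≤ m ^ 2 * (X * Y) := by
    rw [mul_pow]
    exact mul_le_mul_of_nonneg_left (by linarith) (sq_nonneg m)
  generalize s * (1 + v) = a at *
  generalize m * (v * w) = b at *
  generalize m * v ^ 2 = c at *
  have h7 := sq_nonneg s
  have h8 := (sq_nonneg b).trans h5
  constructor
  · nlinarith [sq_nonneg (2 * (a - b) + c), sq_nonneg (a + b)]
  · nlinarith [sq_nonneg (a - b - c), sq_nonneg (a + b)]

/-- Differential inequality for the energy of the damped oscillator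
`p'' + k p' + (2 k + 4) p = F`. -/
lemma oscillator_energy_deriv_le {k p P F : ℝ} (hk : 1 ≤ k) :
    2 * P * (-k * P - (2 * k + 4) * p + F) + (2 * k + 4) * (2 * p * P)
        + (P * P + p * (-k * P - (2 * k + 4) * p + F))
      ≤ -(P ^ 2 + (2 * k + 4) * p ^ 2 + p * P) / 4 + 9 * F ^ 2 := by
  nlinarith [sq_nonneg (P - 8 * F), sq_nonneg (2 * p - F),
    mul_nonneg (sub_nonneg.2 hk) (sq_nonneg (P + p)),
    mul_nonneg (sub_nonneg.2 hk) (sq_nonneg P),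
    mul_nonneg (sub_nonneg.2 hk) (sq_nonneg p), sq_nonneg (P + p), sq_nonneg P, sq_nonneg p]

set_option maxHeartbeats 1000000 in
/-- Asymptotics at `-∞` of trajectories converging to the fixed point, in logarithmic
variables. -/
lemma log_variables_asymptotics {v V w W : ℝ → ℝ} {k lam T : ℝ} (hk : 1 ≤ k)
    (hlam3 : 3 ≤ lam) (hlam4 : lam < 4) (hchar : lam ^ 2 + k * lam = 4 * (k + 2))
    (hv : ∀ t < T, HasDerivAt v (V t) t) (hw : ∀ t < T, HasDerivAt w (W t) t)
    (hV : ∀ t < T, HasDerivAt V (-k * V t - (2 * k + 4) * w t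
      + (Real.exp (4 * t) * (1 + v t) - (2 * k + 4) * (v t * w t))) t)
    (hW : ∀ t < T, HasDerivAt W (-k * W t - (2 * k + 4) * (2 * v t - w t)
      - (2 * k + 4) * v t ^ 2) t)
    (hvlim : Tendsto v atBot (𝓝 0)) (hwlim : Tendsto w atBot (𝓝 0)) :
    ∃ c C S : ℝ, ∀ t < S, |v t + c * Real.exp (lam * t)| ≤ C * Real.exp (4 * t) ∧
      |w t - 2 * c * Real.exp (lam * t)| ≤ C * Real.exp (4 * t) := by
  have hk0 : 0 < k := by linarith
  have hm0 : 0 < 2 * k + 4 := by linarith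
  have hslim := tendsto_exp_mul_atBot (by norm_num : (0:ℝ) < 4)
  have hVlim : Tendsto V atBot (𝓝 0) := by
    refine tendsto_damped_velocity hk0 hv (g := fun t => -(2 * k + 4) * w t
      + (Real.exp (4 * t) * (1 + v t) - (2 * k + 4) * (v t * w t)))
      (fun t ht => (hV t ht).congr_deriv (by ring)) ?_ hvlim
    simpa using (hwlim.const_mul (-(2 * k + 4))).add
      ((hslim.mul (hvlim.const_add 1)).sub ((hvlim.mul hwlim).const_mul (2 * k + 4)))
  have hWlim : Tendsto W atBot (𝓝 0) := by
    refine tendsto_damped_velocity hk0 hw (g := fun t => -(2 * k + 4) * (2 * v t - w t)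
      - (2 * k + 4) * v t ^ 2) (fun t ht => (hW t ht).congr_deriv (by ring)) ?_ hwlim
    simpa using (((hvlim.const_mul 2).sub hwlim).const_mul (-(2 * k + 4))).sub
      ((hvlim.pow 2).const_mul (2 * k + 4))
  -- diagonalising combinations
  set p : ℝ → ℝ := fun t => 2 * v t + w t with hp
  set P : ℝ → ℝ := fun t => 2 * V t + W t with hP
  set A : ℝ → ℝ := fun t => V t - W t + (lam + k) * (v t - w t) with hA
  set B : ℝ → ℝ := fun t => V t - W t - lam * (v t - w t) with hB
  set Fp : ℝ → ℝ := fun t => 2 * (Real.exp (4 * t) * (1 + v t) - (2 * k + 4) * (v t * w t))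
    - (2 * k + 4) * v t ^ 2 with hFp
  set Fq : ℝ → ℝ := fun t => Real.exp (4 * t) * (1 + v t) - (2 * k + 4) * (v t * w t)
    + (2 * k + 4) * v t ^ 2 with hFq
  set E : ℝ → ℝ := fun t =>
    B t ^ 2 + (P t ^ 2 + (2 * k + 4) * p t ^ 2 + p t * P t) with hE
  have hpd : ∀ t < T, HasDerivAt p (P t) t := fun t ht =>
    ((hv t ht).const_mul 2).add (hw t ht)
  have hPd : ∀ t < T, HasDerivAt P (-k * P t - (2 * k + 4) * p t + Fp t) t := fun t ht =>
    (((hV t ht).const_mul 2).add (hW t ht)).congr_deriv (by simp only [hP, hp, hFp]; ring)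
  have hAd : ∀ t < T, HasDerivAt A (lam * A t + Fq t) t := fun t ht =>
    (((hV t ht).sub (hW t ht)).add (((hv t ht).sub (hw t ht)).const_mul (lam + k))).congr_deriv
      (by simp only [hA, hFq]; linear_combination (w t - v t) * hchar)
  have hBd : ∀ t < T, HasDerivAt B (-(lam + k) * B t + Fq t) t := fun t ht =>
    (((hV t ht).sub (hW t ht)).sub (((hv t ht).sub (hw t ht)).const_mul lam)).congr_deriv
      (by simp only [hB, hFq]; linear_combination (w t - v t) * hchar)
  have hEd : ∀ t < T, HasDerivAt E (2 * B t * (-(lam + k) * B t + Fq t)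
      + (2 * P t * (-k * P t - (2 * k + 4) * p t + Fp t) + (2 * k + 4) * (2 * p t * P t)
        + (P t * P t + p t * (-k * P t - (2 * k + 4) * p t + Fp t)))) t := fun t ht => by
    refine (((hBd t ht).fun_pow 2).fun_add ((((hPd t ht).fun_pow 2).fun_add
      (((hpd t ht).fun_pow 2).const_mul (2 * k + 4))).fun_add
        ((hpd t ht).fun_mul (hPd t ht)))).congr_deriv ?_
    simp
  have hE' : ∀ t, 2 * B t * (-(lam + k) * B t + Fq t)
      + (2 * P t * (-k * P t - (2 * k + 4) * p t + Fp t) + (2 * k + 4) * (2 * p t * P t)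
        + (P t * P t + p t * (-k * P t - (2 * k + 4) * p t + Fp t)))
      ≤ -(E t) / 4 + (9 * Fp t ^ 2 + Fq t ^ 2) := fun t => by
    have h1 := oscillator_energy_deriv_le (p := p t) (P := P t) (F := Fp t) hk
    have h2 : 2 * B t * (-(lam + k) * B t + Fq t) ≤ -(B t ^ 2) / 4 + Fq t ^ 2 := by
      nlinarith [sq_nonneg (B t - Fq t),
        mul_nonneg (by linarith : 0 ≤ lam + k - 4) (sq_nonneg (B t)), sq_nonneg (B t)]
    simp only [hE]
    linarith
  have hpE : ∀ t, p t ^ 2 + B t ^ 2 ≤ E t := fun t => by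
    simp only [hE]
    nlinarith [sq_nonneg (P t + p t), sq_nonneg (P t),
      mul_nonneg (sub_nonneg.2 hk) (sq_nonneg (p t)), sq_nonneg (p t)]
  have hq : ∀ t, v t - w t = (A t - B t) / (2 * lam + k) := fun t => by
    have : 2 * lam + k ≠ 0 := by linarith
    simp only [hA, hB]
    field_simp
    ring
  have hAE : ∀ t, v t ^ 2 ≤ A t ^ 2 + E t ∧ w t ^ 2 ≤ A t ^ 2 + E t := fun t => by
    have h1 : (v t - w t) ^ 2 ≤ A t ^ 2 + B t ^ 2 := by
      rw [hq, div_pow, div_le_iff₀ (by positivity)]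
      have : 2 ≤ (2 * lam + k) ^ 2 := by nlinarith
      nlinarith [sq_nonneg (A t + B t), sq_nonneg (A t), sq_nonneg (B t)]
    have h2 := hpE t
    simp only [hp] at h2
    constructor <;>
      nlinarith [sq_nonneg (2 * v t + w t - (v t - w t)),
        sq_nonneg (2 * (2 * v t + w t) + (v t - w t)), sq_nonneg (v t - w t),
        sq_nonneg (2 * v t + w t)]
  have hplim : Tendsto p atBot (𝓝 0) := by simpa using (hvlim.const_mul 2).add hwlim
  have hPlim : Tendsto P atBot (𝓝 0) := by simpa using (hVlim.const_mul 2).add hWlim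
  have hAlim : Tendsto A atBot (𝓝 0) := by
    simpa using (hVlim.sub hWlim).add ((hvlim.sub hwlim).const_mul (lam + k))
  have hBlim : Tendsto B atBot (𝓝 0) := by
    simpa using (hVlim.sub hWlim).sub ((hvlim.sub hwlim).const_mul lam)
  have hElim : Tendsto E atBot (𝓝 0) := by
    simpa using (hBlim.pow 2).add
      (((hPlim.pow 2).add ((hplim.pow 2).const_mul (2 * k + 4))).add (hplim.mul hPlim))
  have hs2 : ∀ t : ℝ, Real.exp (4 * t) ^ 2 = Real.exp (8 * t) := fun t => by
    rw [← Real.exp_nat_mul]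
    ring_nf
  -- a neighbourhood of `-∞` where the trajectory is small
  have hη : 0 < 1 / (30 * (2 * k + 4)) := by positivity
  have hsmall : ∀ᶠ t in atBot, |v t| < 1 / (30 * (2 * k + 4)) ∧
      |w t| < 1 / (30 * (2 * k + 4)) := by
    have h1 := Metric.tendsto_nhds.1 hvlim _ hη
    have h2 := Metric.tendsto_nhds.1 hwlim _ hη
    filter_upwards [h1, h2] with t ht1 ht2
    simpa using And.intro ht1 ht2
  obtain ⟨S₀, hS₀⟩ := eventually_atBot.1 hsmall
  set S := min S₀ T with hS
  have hST : ∀ t < S, t < T := fun t ht => ht.trans_le (min_le_right _ _)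
  have hsm : ∀ t < S, |v t| < 1 / (30 * (2 * k + 4)) ∧ |w t| < 1 / (30 * (2 * k + 4)) :=
    fun t ht => hS₀ t (ht.le.trans (min_le_left _ _))
  have hη1 : 1 / (30 * (2 * k + 4)) ≤ 1 := by
    rw [div_le_one (by positivity)]
    linarith
  have hv1 : ∀ t < S, |v t| ≤ 1 := fun t ht => (hsm t ht).1.le.trans hη1
  have hforce : ∀ t < S, Fp t ^ 2 ≤ 64 * Real.exp (8 * t) + (A t ^ 2 + E t) / 44 ∧
      Fq t ^ 2 ≤ 64 * Real.exp (8 * t) + (A t ^ 2 + E t) / 44 := fun t ht => by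
    have hvη : v t ^ 2 ≤ (1 / (30 * (2 * k + 4))) ^ 2 :=
      sq_le_sq' (by linarith [(abs_lt.1 (hsm t ht).1).1]) (abs_lt.1 (hsm t ht).1).2.le
    have hwη : w t ^ 2 ≤ (1 / (30 * (2 * k + 4))) ^ 2 :=
      sq_le_sq' (by linarith [(abs_lt.1 (hsm t ht).2).1]) (abs_lt.1 (hsm t ht).2).2.le
    have h := forcing_sq_le (m := 2 * k + 4) (s := Real.exp (4 * t)) (hv1 t ht) (hAE t).1
      hwη hvη
    have h0 : 0 ≤ A t ^ 2 + E t := (sq_nonneg _).trans (hAE t).1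
    have hc : 18 * (2 * k + 4) ^ 2 * ((A t ^ 2 + E t) * (1 / (30 * (2 * k + 4))) ^ 2)
        = (A t ^ 2 + E t) / 50 := by
      field_simp
      ring
    rw [hc, hs2] at h
    exact ⟨h.1.trans (by linarith), h.2.trans (by linarith)⟩
  obtain ⟨C, hC0, S₁, hS₁, hdecay⟩ := unstable_manifold_decay (M := 64) hlam3 (by norm_num)
    (fun t ht => hAd t (hST t ht)) (fun t ht => hEd t (hST t ht))
    (fun t ht => (hforce t ht).2)
    (fun t ht => (hE' t).trans (by linarith [(hforce t ht).1, (hforce t ht).2])) hAlim hElim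
  have hS₁T : ∀ t < S₁, t < T := fun t ht => hST t (ht.trans_le hS₁)
  -- the forcing is now known to be of order `exp (4 t)`
  set M := 64 + 18 * (2 * k + 4) ^ 2 * C ^ 2 with hM
  have hM0 : 0 ≤ M := by positivity
  have hforce' : ∀ t < S₁, Fp t ^ 2 ≤ M * Real.exp (8 * t) ∧
      Fq t ^ 2 ≤ M * Real.exp (8 * t) := fun t ht => by
    have h := forcing_sq_le (m := 2 * k + 4) (s := Real.exp (4 * t))
      (hv1 t (ht.trans_le hS₁)) ((hAE t).1.trans (hdecay t ht))
      ((hAE t).2.trans (hdecay t ht)) ((hAE t).1.trans (hdecay t ht))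
    have hc : 64 * Real.exp (4 * t) ^ 2 + 18 * (2 * k + 4) ^ 2
        * (C * Real.exp (4 * t) * (C * Real.exp (4 * t))) = M * Real.exp (8 * t) := by
      rw [← hs2, hM]
      ring
    rwa [hc] at h
  have hEle : ∀ t < S₁, E t ≤ 10 * M * Real.exp (8 * t) := fun t ht =>
    stable_energy_le (by positivity) (fun t ht => hEd t (hS₁T t ht))
      (fun t ht => (hE' t).trans (by linarith [(hforce' t ht).1, (hforce' t ht).2])) hElim ht
  have habs : ∀ {x K t : ℝ}, 0 ≤ K → x ^ 2 ≤ K * Real.exp (8 * t) →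
      |x| ≤ (K + 1) * Real.exp (4 * t) := fun {x K t} hK hx => by
    refine abs_le_of_sq_le_sq (hx.trans ?_) (by positivity)
    rw [mul_pow, hs2]
    exact mul_le_mul_of_nonneg_right (by nlinarith) (Real.exp_pos _).le
  obtain ⟨a, ha⟩ := exists_leading_coefficient hlam4 (by positivity : 0 ≤ M + 1)
    (fun t ht => hAd t (hS₁T t ht)) (fun t ht => habs hM0 (hforce' t ht).2)
  set N := (M + 1) / (4 - lam) with hN
  refine ⟨-(a / (3 * (2 * lam + k))), 2 * (N + (10 * M + 1)), S₁, fun t ht => ?_⟩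
  have hpb : |p t| ≤ (10 * M + 1) * Real.exp (4 * t) :=
    habs (by positivity) (by linarith [hpE t, hEle t ht, sq_nonneg (B t)])
  have hBb : |B t| ≤ (10 * M + 1) * Real.exp (4 * t) :=
    habs (by positivity) (by linarith [hpE t, hEle t ht, sq_nonneg (p t)])
  have hden : 1 ≤ 2 * lam + k := by linarith
  have hqb : |v t - w t - a / (2 * lam + k) * Real.exp (lam * t)|
      ≤ (N + (10 * M + 1)) * Real.exp (4 * t) := by
    have heq : v t - w t - a / (2 * lam + k) * Real.exp (lam * t)
        = (A t - a * Real.exp (lam * t) - B t) / (2 * lam + k) := by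
      rw [hq]
      ring
    rw [heq, abs_div, abs_of_pos (by linarith : 0 < 2 * lam + k)]
    refine (div_le_self (abs_nonneg _) hden).trans ((abs_sub _ _).trans ?_)
    linarith [ha t ht]
  have hN0 : 0 ≤ N * Real.exp (4 * t) := (abs_nonneg _).trans (ha t ht)
  have hc : a / (3 * (2 * lam + k)) = a / (2 * lam + k) / 3 := by
    rw [div_div, mul_comm]
  rw [hc]
  have h1 := abs_le.1 hpb
  have h2 := abs_le.1 hqb
  simp only [hp] at h1
  constructor <;> rw [abs_le] <;> constructor <;> linarith [h1.1, h1.2, h2.1, h2.2]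

/-- The second derivative in the logarithmic variable `t = log r`. -/
lemma hasDerivAt_exp_mul_deriv_comp_exp {f : ℝ → ℝ} {t : ℝ}
    (hf : DifferentiableAt ℝ (deriv f) (Real.exp t)) :
    HasDerivAt (fun s => Real.exp s * deriv f (Real.exp s))
      (Real.exp t * deriv f (Real.exp t)
        + Real.exp t ^ 2 * deriv (deriv f) (Real.exp t)) t := by
  refine ((Real.hasDerivAt_exp t).fun_mul
    (hf.hasDerivAt.comp t (Real.hasDerivAt_exp t))).congr_deriv ?_
  simp only [Function.comp_apply]
  ring

/-- Asymptotic behaviour near `r = 0` of solutions of the factored-out singular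
Schrödinger–Newton–Hooke system in supercritical dimension `d ≥ 7`. -/
theorem stmt2 (d : ℕ) (hd : 7 ≤ d) (lam : ℝ)
    (hlam : lam = (-(d:ℝ) + 6 + Real.sqrt ((d:ℝ)^2 + 4*(d:ℝ) - 28)) / 2)
    (r₀ : ℝ) (hr₀ : 0 < r₀)
    (ut ht : ℝ → ℝ)
    -- `ut` is C² on (0, r₀)
    (hu1 : ∀ r ∈ Ioo (0:ℝ) r₀, DifferentiableAt ℝ ut r)
    (hu2 : ∀ r ∈ Ioo (0:ℝ) r₀, DifferentiableAt ℝ (deriv ut) r)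
    (hu3 : ContinuousOn (deriv (deriv ut)) (Ioo 0 r₀))
    -- `ht` is C² on (0, r₀)
    (hh1 : ∀ r ∈ Ioo (0:ℝ) r₀, DifferentiableAt ℝ ht r)
    (hh2 : ∀ r ∈ Ioo (0:ℝ) r₀, DifferentiableAt ℝ (deriv ht) r)
    (hh3 : ContinuousOn (deriv (deriv ht)) (Ioo 0 r₀))
    -- the system of equations on (0, r₀)
    (hequ : ∀ r ∈ Ioo (0:ℝ) r₀,
      deriv (deriv ut) r + ((d:ℝ) - 5) / r * deriv ut r
        + 2 * ((d:ℝ) - 4) / r^2 * (ut r * ht r - ut r) - r^2 * ut r = 0)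
    (heqh : ∀ r ∈ Ioo (0:ℝ) r₀,
      deriv (deriv ht) r + ((d:ℝ) - 5) / r * deriv ht r
        + 2 * ((d:ℝ) - 4) / r^2 * ((ut r)^2 - ht r) = 0)
    -- boundary behaviour at 0⁺
    (hulim : Tendsto ut (nhdsWithin 0 (Ioi 0)) (nhds 1))
    (hhlim : Tendsto ht (nhdsWithin 0 (Ioi 0)) (nhds 1)) :
    ∃ c : ℝ, ∃ C > (0:ℝ), ∃ r₁ > (0:ℝ), ∀ r : ℝ, 0 < r → r < r₁ →
      |ut r - 1 + c * r ^ lam| ≤ C * r ^ 4 ∧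
      |ht r - 1 - 2 * c * r ^ lam| ≤ C * r ^ 4 := by
  have hd' : (7:ℝ) ≤ d := by exact_mod_cast hd
  have hdisc : (0:ℝ) ≤ (d:ℝ) ^ 2 + 4 * d - 28 := by nlinarith
  have hsqrt := Real.sq_sqrt hdisc
  have hlam3 : 3 ≤ lam := by
    have : (d:ℝ) ≤ Real.sqrt ((d:ℝ) ^ 2 + 4 * d - 28) := Real.le_sqrt_of_sq_le (by linarith)
    linarith
  have hlam4 : lam < 4 := by
    have : Real.sqrt ((d:ℝ) ^ 2 + 4 * d - 28) < d + 2 := by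
      rw [Real.sqrt_lt' (by linarith)]
      nlinarith
    linarith
  have hchar : lam ^ 2 + ((d:ℝ) - 6) * lam = 4 * ((d:ℝ) - 6 + 2) := by
    rw [hlam]
    linear_combination hsqrt / 4
  have hmem : ∀ t < Real.log r₀, Real.exp t ∈ Ioo (0:ℝ) r₀ := fun t ht =>
    ⟨Real.exp_pos t, (Real.lt_log_iff_exp_lt hr₀).1 ht⟩
  have hexp4 : ∀ t : ℝ, Real.exp (4 * t) = Real.exp t ^ 4 := fun t => by
    rw [← Real.exp_nat_mul]
    norm_num
  have hexp0 : Tendsto Real.exp atBot (𝓝[>] 0) := Real.tendsto_exp_atBot_nhdsGT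
  obtain ⟨c, C, S, hcC⟩ := log_variables_asymptotics (k := (d:ℝ) - 6) (lam := lam)
    (T := Real.log r₀) (v := fun t => ut (Real.exp t) - 1) (w := fun t => ht (Real.exp t) - 1)
    (V := fun t => Real.exp t * deriv ut (Real.exp t))
    (W := fun t => Real.exp t * deriv ht (Real.exp t)) (by linarith) hlam3 hlam4 hchar
    (fun t h => by
      rw [mul_comm]
      exact ((hu1 _ (hmem t h)).hasDerivAt.comp t (Real.hasDerivAt_exp t)).sub_const 1)
    (fun t h => by
      rw [mul_comm]
      exact ((hh1 _ (hmem t h)).hasDerivAt.comp t (Real.hasDerivAt_exp t)).sub_const 1)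
    (fun t h => by
      refine (hasDerivAt_exp_mul_deriv_comp_exp (hu2 _ (hmem t h))).congr_deriv ?_
      have := hequ _ (hmem t h)
      have hr := (Real.exp_pos t).ne'
      rw [hexp4]
      generalize Real.exp t = r at *
      field_simp at this
      linear_combination this)
    (fun t h => by
      refine (hasDerivAt_exp_mul_deriv_comp_exp (hh2 _ (hmem t h))).congr_deriv ?_
      have := heqh _ (hmem t h)
      have hr := (Real.exp_pos t).ne'
      generalize Real.exp t = r at *
      field_simp at this
      linear_combination this)
    (by simpa using (hulim.comp hexp0).sub_const 1)
    (by simpa using (hhlim.comp hexp0).sub_const 1)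
  refine ⟨c, |C| + 1, by positivity, Real.exp S, Real.exp_pos S, fun r hr hrS => ?_⟩
  have h := hcC (Real.log r) ((Real.log_lt_iff_lt_exp hr).2 hrS)
  simp only [hexp4, Real.exp_log hr] at h
  rw [mul_comm lam, ← Real.rpow_def_of_pos hr] at h
  have hC : C * r ^ 4 ≤ (|C| + 1) * r ^ 4 :=
    mul_le_mul_of_nonneg_right (by linarith [le_abs_self C]) (by positivity)
  exact ⟨h.1.trans hC, h.2.trans hC⟩
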